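/- Under twist on splitting sets and absolute continuity of the first marginal, the optimal plan is unique and Monge: if c is continuous, semi-concave, and twisted on c-splitting sets, and μ₁ is absolutely continuous with respect to Lebesgue measure, then any optimizer γ of ∫ c dγ over plans with marginals μ₁,...,μₘ is of the form γ = (Id, T)_# μ₁ for a Borel map T : M₁ → M₂ × ... × Mₘ, and γ is the unique optimizer. -/

import Mathlib

open MeasureTheory

/-- A c-splitting set: a set on which some potentials u, v₁,...,vₘ with
u(x₁) + ∑ᵢ vᵢ(xᵢ) ≤ c achieve equality. -/
def IsSplittingSet {E : Type*} {ι : Type*} [Fintype ι] {M : ι → Type*}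
    (c : E × (∀ i, M i) → ℝ) (S : Set (E × ∀ i, M i)) : Prop :=
  ∃ (u : E → ℝ) (v : ∀ i, M i → ℝ),
    (∀ p, u p.1 + ∑ i, v i (p.2 i) ≤ c p) ∧
    (∀ p ∈ S, u p.1 + ∑ i, v i (p.2 i) = c p)

open scoped CompactlySupported

/-- Riesz representation on a compact space. -/
lemma riesz_prob {X : Type*} [TopologicalSpace X] [CompactSpace X] [T2Space X]
    [MeasurableSpace X] [BorelSpace X] (g : C(X, ℝ) →ₗ[ℝ] ℝ)
    (hpos : ∀ f, 0 ≤ f → 0 ≤ g f) (h1 : g 1 = 1) :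
    ∃ π : Measure X, IsProbabilityMeasure π ∧ ∀ f : C(X, ℝ), ∫ x, f x ∂π = g f := by
  let Λ : C_c(X, ℝ) →ₚ[ℝ] ℝ := PositiveLinearMap.mk₀
    { toFun := fun f => g (f : C(X, ℝ))
      map_add' := fun a b => by rw [← map_add]; rfl
      map_smul' := fun a b => by rw [← map_smul]; rfl }
    (fun f hf => hpos _ (fun x => hf x))
  have hΛ : ∀ f : C(X, ℝ), ∫ x, f x ∂(RealRMK.rieszMeasure Λ) = g f := by
    intro f
    let f' : C_c(X, ℝ) :=
      { toFun := f
        hasCompactSupport' := HasCompactSupport.of_compactSpace _ }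
    have := RealRMK.integral_rieszMeasure Λ f'
    exact this
  refine ⟨RealRMK.rieszMeasure Λ, ?_, hΛ⟩
  have h := hΛ 1
  rw [h1] at h
  simp only [ContinuousMap.one_apply, integral_const, smul_eq_mul, mul_one] at h
  constructor
  have : (RealRMK.rieszMeasure Λ).real Set.univ = 1 := h
  rw [Measure.real, ENNReal.toReal_eq_one_iff] at this
  exact this

lemma integrable_cm {X : Type*} [TopologicalSpace X] [CompactSpace X]
    [MeasurableSpace X] [BorelSpace X] (γ : Measure X) [IsFiniteMeasure γ] (f : C(X, ℝ)) :
    Integrable (fun x => f x) γ :=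
  f.continuous.integrable_of_hasCompactSupport (HasCompactSupport.of_compactSpace _)

/-- Approximate duality on a compact space. -/
lemma duality_approx {X : Type*} [TopologicalSpace X] [CompactSpace X] [T2Space X]
    [MeasurableSpace X] [BorelSpace X] (V : Submodule ℝ C(X, ℝ)) (hV : (1 : C(X, ℝ)) ∈ V)
    (γ : Measure X) [IsProbabilityMeasure γ] (c : C(X, ℝ))
    (hopt : ∀ γ' : Measure X, IsProbabilityMeasure γ' →
      (∀ h ∈ V, ∫ x, h x ∂γ' = ∫ x, h x ∂γ) → ∫ x, c x ∂γ ≤ ∫ x, c x ∂γ')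
    (ε : ℝ) (hε : 0 < ε) :
    ∃ h ∈ V, (∀ x, h x ≤ c x) ∧ ∫ x, c x ∂γ - ε ≤ ∫ x, h x ∂γ := by
  let I : C(X, ℝ) →ₗ[ℝ] ℝ :=
    { toFun := fun f => ∫ x, f x ∂γ
      map_add' := fun a b => integral_add (integrable_cm γ a) (integrable_cm γ b)
      map_smul' := fun a b => integral_const_mul a _ }
  have Imono : ∀ f g : C(X, ℝ), f ≤ g → I f ≤ I g := fun f g h =>
    integral_mono (integrable_cm γ f) (integrable_cm γ g) h
  have I1 : I 1 = 1 := by simp [I]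
  let A : C(X, ℝ) → Set ℝ := fun f => {r | ∃ h ∈ V, f ≤ h ∧ I h = r}
  let N : C(X, ℝ) → ℝ := fun f => sInf (A f)
  have Abdd : ∀ f, BddBelow (A f) := fun f => ⟨I f, by
    rintro r ⟨h, -, hle, rfl⟩; exact Imono _ _ hle⟩
  have Ane : ∀ f, (A f).Nonempty := fun f =>
    ⟨_, ‖f‖ • 1, V.smul_mem _ hV, fun x => by
      simpa using (le_abs_self _).trans (f.norm_coe_le_norm x), rfl⟩
  have Nle : ∀ f, ∀ h ∈ V, f ≤ h → N f ≤ I h := fun f h hh hle =>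
    csInf_le (Abdd f) ⟨h, hh, hle, rfl⟩
  have leN : ∀ f, ∀ r, (∀ h ∈ V, f ≤ h → r ≤ I h) → r ≤ N f := fun f r H =>
    le_csInf (Ane f) (by rintro _ ⟨h, hh, hle, rfl⟩; exact H h hh hle)
  have Nhom1 : ∀ t : ℝ, 0 < t → ∀ f, t * N f ≤ N (t • f) := by
    intro t ht f
    apply leN
    intro h hh hle
    have := Nle f (t⁻¹ • h) (V.smul_mem _ hh) (fun x => by
      have : t * f x ≤ h x := hle x
      change f x ≤ t⁻¹ * h x
      rw [inv_mul_eq_div, le_div_iff₀ ht]; linarith)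
    rw [map_smul, smul_eq_mul, inv_mul_eq_div, le_div_iff₀ ht] at this
    linarith
  have Nhom : ∀ t : ℝ, 0 < t → ∀ f, N (t • f) = t * N f := by
    intro t ht f
    apply le_antisymm _ (Nhom1 t ht f)
    have := Nhom1 t⁻¹ (inv_pos.2 ht) (t • f)
    rw [smul_smul, inv_mul_cancel₀ ht.ne', one_smul, inv_mul_eq_div, div_le_iff₀ ht] at this
    linarith
  have Nadd : ∀ f g, N (f + g) ≤ N f + N g := by
    intro f g
    have : N (f + g) - N g ≤ N f := by
      apply leN
      intro h hh hle
      have : N (f + g) - I h ≤ N g := by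
        apply leN
        intro k hk kle
        have := Nle (f + g) (h + k) (V.add_mem hh hk) (add_le_add hle kle)
        rw [map_add] at this; linarith
      linarith
    linarith
  have N0 : N 0 = 0 := by
    apply le_antisymm
    · simpa using Nle 0 0 V.zero_mem le_rfl
    · apply leN
      intro h hh hle
      simpa using Imono _ _ hle
  have key : ∃ g : C(X, ℝ) →ₗ[ℝ] ℝ, g (-c) = N (-c) ∧ ∀ f, g f ≤ N f := by
    have H : ∀ t : ℝ, t • (-c) = 0 → (RingHom.id ℝ) t • N (-c) = 0 := by
      intro t ht
      rcases smul_eq_zero.1 ht with h | h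
      · simp [h]
      · rw [h, N0, smul_zero]
    obtain ⟨g, hg1, hg⟩ := exists_extension_of_le_sublinear
        (LinearPMap.mkSpanSingleton' (-c) (N (-c)) H) N Nhom Nadd
        (by
          rintro ⟨x, hx⟩
          obtain ⟨t, rfl⟩ := Submodule.mem_span_singleton.1 hx
          rw [LinearPMap.mkSpanSingleton'_apply, smul_eq_mul]
          change t * N (-c) ≤ N (t • (-c))
          rcases lt_trichotomy t 0 with ht | ht | ht
          · have h1 := Nhom (-t) (by linarith) (-c)
            have h2 := Nadd (t • (-c)) ((-t) • (-c))
            rw [← add_smul, add_neg_cancel, zero_smul, N0] at h2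
            linarith
          · rw [ht, zero_smul, N0, zero_mul]
          · exact (Nhom t ht (-c)).ge)
    refine ⟨g, ?_, hg⟩
    have := hg1 ⟨-c, Submodule.mem_span_singleton_self _⟩
    exact this.trans (LinearPMap.mkSpanSingleton'_apply_self _ _ _ _)
  obtain ⟨g, hgc, hg⟩ := key
  have gV : ∀ h ∈ V, g h = I h := by
    intro h hh
    apply le_antisymm ((hg h).trans (Nle h h hh le_rfl))
    have := (hg (-h)).trans (Nle (-h) (-h) (V.neg_mem hh) le_rfl)
    rw [map_neg, map_neg] at this
    linarith
  obtain ⟨π, hπ, hπg⟩ := riesz_prob g (fun f hf => by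
    have := (hg (-f)).trans (Nle (-f) 0 V.zero_mem (by simpa using hf))
    rw [map_neg, map_zero] at this
    linarith) (by rw [gV 1 hV, I1])
  have h1 := hopt π hπ (fun h hh => by rw [hπg, gV h hh]; rfl)
  rw [hπg] at h1
  rw [map_neg] at hgc
  obtain ⟨r, ⟨h, hh, hle, rfl⟩, hr⟩ := exists_lt_of_csInf_lt (Ane (-c))
    (show sInf (A (-c)) < N (-c) + ε from lt_add_of_pos_right _ hε)
  refine ⟨-h, V.neg_mem hh, fun x => ?_, ?_⟩
  · have : - c x ≤ h x := hle x
    change - h x ≤ c x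
    linarith
  · have : ∫ x, (-h) x ∂γ = - I h := map_neg I h
    rw [this]; linarith


def HasMod {T : Type*} [PseudoMetricSpace T] (f : T → ℝ) (ε δ : ℝ) : Prop :=
  ∀ x x', dist x x' < δ → |f x - f x'| ≤ ε

def ModLe {T S : Type*} [PseudoMetricSpace T] [PseudoMetricSpace S] (f : T → ℝ) (g : S → ℝ) :
    Prop := ∀ ε δ, HasMod f ε δ → HasMod g ε δ

lemma exists_hasMod {T : Type*} [PseudoMetricSpace T] [CompactSpace T] {f : T → ℝ}
    (hf : Continuous f) {ε : ℝ} (hε : 0 < ε) : ∃ δ > 0, HasMod f ε δ := by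
  obtain ⟨δ, hδ, h⟩ := Metric.uniformContinuous_iff.1
    (CompactSpace.uniformContinuous_of_continuous hf) ε hε
  exact ⟨δ, hδ, fun x x' hx => by have := h hx; rw [Real.dist_eq] at this; exact this.le⟩

lemma ModLe.continuous {T S : Type*} [PseudoMetricSpace T] [PseudoMetricSpace S] [CompactSpace T]
    {f : T → ℝ} {g : S → ℝ} (hf : Continuous f) (h : ModLe f g) : Continuous g := by
  rw [Metric.continuous_iff]
  intro b ε hε
  obtain ⟨δ, hδ, hm⟩ := exists_hasMod hf (half_pos hε)
  refine ⟨δ, hδ, fun a ha => ?_⟩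
  have := h _ _ hm a b ha
  rw [Real.dist_eq]; linarith

lemma exists_inf {X Y : Type*} [TopologicalSpace X] [CompactSpace X] [Nonempty X]
    (F : X → Y → ℝ) (hF : ∀ y, Continuous fun x => F x y) :
    ∃ u : Y → ℝ, (∀ x y, u y ≤ F x y) ∧ (∀ y, ∃ x, u y = F x y) := by
  have : ∀ y, ∃ x, ∀ x', F x y ≤ F x' y := fun y => by
    obtain ⟨x, -, hx⟩ := isCompact_univ.exists_isMinOn Set.univ_nonempty (hF y).continuousOn
    exact ⟨x, fun x' => hx (Set.mem_univ x')⟩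
  choose m hm using this
  exact ⟨fun y => F (m y) y, fun x y => hm y x, fun y => ⟨m y, rfl⟩⟩

lemma inf_mod {X Y : Type*} {F : X → Y → ℝ} {u : Y → ℝ} (h1 : ∀ x y, u y ≤ F x y)
    (h2 : ∀ y, ∃ x, u y = F x y) {y y' : Y} {ε : ℝ} (h : ∀ x, |F x y - F x y'| ≤ ε) :
    |u y - u y'| ≤ ε := by
  obtain ⟨a, ha⟩ := h2 y
  obtain ⟨b, hb⟩ := h2 y'
  have e1 := h1 a y'
  have e2 := h1 b y
  have e3 := abs_le.1 (h a)
  have e4 := abs_le.1 (h b)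
  rw [abs_le]; constructor <;> linarith

lemma sum_update_eq {ι : Type*} [Fintype ι] [DecidableEq ι] {M : ι → Type*}
    (v : ∀ i, M i → ℝ) (z : ∀ i, M i) (i : ι) (y : M i) :
    ∑ k, v k (Function.update z i y k) = ∑ k, v k (z k) + (v i y - v i (z i)) := by
  rw [← sub_eq_iff_eq_add', ← Finset.sum_sub_distrib, Finset.sum_eq_single i]
  · simp
  · intro b _ hb
    rw [Function.update_of_ne hb, sub_self]
  · simp

lemma regularize {A : Type*} [MetricSpace A] [CompactSpace A] [Nonempty A]
    {ι : Type*} [Fintype ι] {M : ι → Type*}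
    [∀ i, MetricSpace (M i)] [∀ i, CompactSpace (M i)] [∀ i, Nonempty (M i)]
    (c : A × (∀ i, M i) → ℝ) (hc : Continuous c) (u : A → ℝ) (hu : Continuous u)
    (v : ∀ i, M i → ℝ) (hv : ∀ i, Continuous (v i))
    (hle : ∀ p, u p.1 + ∑ i, v i (p.2 i) ≤ c p) :
    ∃ (u' : A → ℝ) (v' : ∀ i, M i → ℝ), (∀ x, u x ≤ u' x) ∧ (∀ i y, v i y ≤ v' i y) ∧
      (∀ p, u' p.1 + ∑ i, v' i (p.2 i) ≤ c p) ∧ ModLe c u' ∧ ∀ i, ModLe c (v' i) := by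
  classical
  have step : ∀ s : Finset ι, ∃ v' : ∀ i, M i → ℝ, (∀ i, Continuous (v' i)) ∧
      (∀ i y, v i y ≤ v' i y) ∧ (∀ p : A × (∀ i, M i), u p.1 + ∑ i, v' i (p.2 i) ≤ c p) ∧
      ∀ i ∈ s, ModLe c (v' i) := by
    intro s
    induction s using Finset.induction_on with
    | empty => exact ⟨v, hv, fun _ _ => le_rfl, hle, by simp⟩
    | insert a s ha ih =>
      obtain ⟨w, hw, hvw, hwle, hwm⟩ := ih
      let F : (A × (∀ i, M i)) → M a → ℝ := fun p y =>
        c (p.1, Function.update p.2 a y) - u p.1 - (∑ k, w k (p.2 k) - w a (p.2 a))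
      obtain ⟨g, hg1, hg2⟩ := exists_inf F (fun y => by
        have h1 : Continuous fun p : A × (∀ i, M i) => c (p.1, Function.update p.2 a y) :=
          hc.comp (continuous_fst.prodMk (continuous_snd.update a continuous_const))
        have h2 : ∀ k, Continuous fun p : A × (∀ i, M i) => w k (p.2 k) := fun k =>
          (hw k).comp ((continuous_apply k).comp continuous_snd)
        exact (h1.sub (hu.comp continuous_fst)).sub
          ((continuous_finsetSum _ fun k _ => h2 k).sub (h2 a)))
      have gm : ModLe c g := by
        intro ε δ hm y y' hy
        apply inf_mod hg1 hg2
        intro p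
        have := hm (p.1, Function.update p.2 a y) (p.1, Function.update p.2 a y') (by
          rw [Prod.dist_eq, dist_self, max_eq_right dist_nonneg]
          refine lt_of_le_of_lt ?_ hy
          rw [dist_pi_le_iff dist_nonneg]
          intro b
          by_cases hb : b = a
          · subst hb; simp
          · simp [Function.update_of_ne hb])
        convert this using 2
        simp only [F]; ring
      refine ⟨Function.update w a g, ?_, ?_, ?_, ?_⟩
      · intro i
        by_cases hi : i = a
        · subst hi; simpa using gm.continuous hc
        · rw [Function.update_of_ne hi]; exact hw i
      · intro i y
        by_cases hi : i = a
        · subst hi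
          rw [Function.update_self]
          obtain ⟨p, hp⟩ := hg2 y
          rw [hp]
          have h1 := hwle (p.1, Function.update p.2 i y)
          simp only at h1
          rw [sum_update_eq] at h1
          have h2 := hvw i y
          simp only [F]; linarith
        · rw [Function.update_of_ne hi]; exact hvw i y
      · intro p
        have h1 := hg1 p (p.2 a)
        simp only [F, Function.update_eq_self] at h1
        have h2 : ∑ i, Function.update w a g i (p.2 i)
            = ∑ i, w i (p.2 i) + (g (p.2 a) - w a (p.2 a)) := by
          rw [← sub_eq_iff_eq_add', ← Finset.sum_sub_distrib, Finset.sum_eq_single a]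
          · simp
          · intro b _ hb
            rw [Function.update_of_ne hb, sub_self]
          · simp
        rw [h2]; linarith
      · intro i hi
        by_cases hia : i = a
        · subst hia; simpa using gm
        · rw [Function.update_of_ne hia]
          exact hwm i ((Finset.mem_insert.1 hi).resolve_left hia)
  obtain ⟨w, hw, hvw, hwle, hwm⟩ := step Finset.univ
  let F : (∀ i, M i) → A → ℝ := fun z x => c (x, z) - ∑ k, w k (z k)
  obtain ⟨g, hg1, hg2⟩ := exists_inf F (fun x => by
    have h2 : ∀ k, Continuous fun z : (∀ i, M i) => w k (z k) := fun k =>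
      (hw k).comp (continuous_apply k)
    exact (hc.comp (continuous_const.prodMk continuous_id)).sub
      (continuous_finsetSum _ fun k _ => h2 k))
  refine ⟨g, w, ?_, hvw, ?_, ?_, fun i => hwm i (Finset.mem_univ i)⟩
  · intro x
    obtain ⟨z, hz⟩ := hg2 x
    have := hwle (x, z)
    simp only [F] at hz this
    linarith
  · intro p
    have := hg1 p.2 p.1
    simp only [F] at this
    linarith
  · intro ε δ hm y y' hy
    apply inf_mod hg1 hg2
    intro z
    have := hm (y, z) (y', z) (by
      rw [Prod.dist_eq, dist_self, max_eq_left dist_nonneg]; exact hy)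
    convert this using 2
    simp only [F]; ring

/-- Continuous functions of the form `u(x) + ∑ v i (z i)`. -/
def sumSpace (A : Type*) [MetricSpace A] {ι : Type*} [Fintype ι] (M : ι → Type*)
    [∀ i, MetricSpace (M i)] : Submodule ℝ C(A × (∀ i, M i), ℝ) where
  carrier := {H | ∃ (u : C(A, ℝ)) (v : ∀ i, C(M i, ℝ)), ∀ p, H p = u p.1 + ∑ i, v i (p.2 i)}
  add_mem' := by
    rintro a b ⟨u, v, h⟩ ⟨u', v', h'⟩
    refine ⟨u + u', fun i => v i + v' i, fun p => ?_⟩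
    simp only [ContinuousMap.add_apply, h, h', Finset.sum_add_distrib]
    ring
  zero_mem' := ⟨0, 0, fun p => by simp⟩
  smul_mem' := by
    rintro t a ⟨u, v, h⟩
    refine ⟨t • u, fun i => t • v i, fun p => ?_⟩
    simp only [ContinuousMap.smul_apply, h, smul_eq_mul, mul_add, Finset.mul_sum]

lemma duality_attained {A : Type*} [MetricSpace A] [CompactSpace A] [Nonempty A]
    [MeasurableSpace A] [BorelSpace A]
    {ι : Type*} [Fintype ι] {M : ι → Type*}
    [∀ i, MetricSpace (M i)] [∀ i, CompactSpace (M i)] [∀ i, Nonempty (M i)]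
    [∀ i, MeasurableSpace (M i)] [∀ i, BorelSpace (M i)]
    (γ : Measure (A × (∀ i, M i))) [IsProbabilityMeasure γ] (c : C(A × (∀ i, M i), ℝ))
    (hopt : ∀ γ' : Measure (A × (∀ i, M i)), IsProbabilityMeasure γ' →
      (∀ h ∈ sumSpace A M, ∫ x, h x ∂γ' = ∫ x, h x ∂γ) → ∫ x, c x ∂γ ≤ ∫ x, c x ∂γ') :
    ∃ (u : C(A, ℝ)) (v : ∀ i, C(M i, ℝ)), (∀ p, u p.1 + ∑ i, v i (p.2 i) ≤ c p) ∧
      ∫ p, c p ∂γ ≤ ∫ p, (u p.1 + ∑ i, v i (p.2 i)) ∂γ := by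
  classical
  obtain ⟨x0⟩ := ‹Nonempty A›
  let z0 : ∀ i, M i := fun i => Classical.arbitrary _
  let m : ℝ := Fintype.card ι + 1
  let B : ℝ := ‖c‖
  have hB : ∀ p, |c p| ≤ B := fun p => c.norm_coe_le_norm p
  let R : ℝ := B + 1 + m * (2 * B)
  let 𝒜 : Set (BoundedContinuousFunction (A × (∀ i, M i)) ℝ) := {H |
    (∀ p, H p = H (p.1, z0) + ∑ i, (H (x0, Function.update z0 i (p.2 i)) - H (x0, z0))) ∧
    (∀ p, H p ≤ c p) ∧ (∀ p, -R ≤ H p) ∧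
    (∀ ε δ, HasMod c ε δ → HasMod H (m * ε) δ)}
  have ev : ∀ p : A × (∀ i, M i),
      Continuous fun H : BoundedContinuousFunction (A × (∀ i, M i)) ℝ => H p :=
    fun p => continuous_eval_const p
  have hclosed : IsClosed 𝒜 := by
    refine IsClosed.and ?_ (IsClosed.and ?_ (IsClosed.and ?_ ?_))
    · simp only [Set.ofPred_forall]
      refine isClosed_iInter fun p => isClosed_eq (ev p) ?_
      exact (ev _).add (continuous_finsetSum _ fun i _ => (ev _).sub (ev _))
    · simp only [Set.ofPred_forall]
      exact isClosed_iInter fun p => isClosed_le (ev p) continuous_const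
    · simp only [Set.ofPred_forall]
      exact isClosed_iInter fun p => isClosed_le continuous_const (ev p)
    · simp only [HasMod, Set.ofPred_forall]
      exact isClosed_iInter fun ε => isClosed_iInter fun δ => isClosed_iInter fun _ =>
        isClosed_iInter fun x => isClosed_iInter fun y => isClosed_iInter fun _ =>
        isClosed_le ((ev x).sub (ev y)).abs continuous_const
  have hm : 0 < m := by positivity
  have hcomp : IsCompact 𝒜 := by
    apply BoundedContinuousFunction.arzela_ascoli₂ (Set.Icc (-R) B) isCompact_Icc 𝒜 hclosed
    · intro f x hf
      exact ⟨hf.2.2.1 x, (hf.2.1 x).trans ((le_abs_self _).trans (hB x))⟩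
    · intro x
      rw [Metric.equicontinuousAt_iff]
      intro ε hε
      obtain ⟨δ, hδ, h⟩ := exists_hasMod c.continuous (show 0 < ε / (2 * m) by positivity)
      refine ⟨δ, hδ, fun y hy f => ?_⟩
      have := f.2.2.2.2 _ _ h x y (by rwa [dist_comm])
      rw [Real.dist_eq]
      have e : m * (ε / (2 * m)) = ε / 2 := by field_simp
      rw [e] at this
      exact lt_of_le_of_lt this (half_lt_self hε)
  have hIntegrable : ∀ H : BoundedContinuousFunction (A × (∀ i, M i)) ℝ, Integrable (fun p => H p) γ :=
    fun H => integrable_cm γ H.toContinuousMap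
  have hIcont : Continuous fun H : BoundedContinuousFunction (A × (∀ i, M i)) ℝ =>
      ∫ p, H p ∂γ := by
    have : LipschitzWith 1 fun H : BoundedContinuousFunction (A × (∀ i, M i)) ℝ =>
      ∫ p, H p ∂γ := by
      apply LipschitzWith.of_dist_le_mul
      intro H G
      rw [Real.dist_eq, ← integral_sub (hIntegrable H) (hIntegrable G)]
      have := norm_integral_le_of_norm_le_const (μ := γ) (f := fun p => H p - G p)
        (C := dist H G) (Filter.Eventually.of_forall fun p => by
          rw [← dist_eq_norm]; exact BoundedContinuousFunction.dist_coe_le_dist p)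
      simpa using this
    exact this.continuous
  have happrox : ∀ ε, 0 < ε → ε ≤ 1 → ∃ H ∈ 𝒜, ∫ p, c p ∂γ - ε ≤ ∫ p, H p ∂γ := by
    intro ε hε hε1
    obtain ⟨h, ⟨u, v, huv⟩, hle, hge⟩ := duality_approx (sumSpace A M)
      ⟨1, 0, fun p => by simp⟩ γ c hopt ε hε
    obtain ⟨u', v', hu, hv, hle', um, vm⟩ := regularize c c.continuous u u.continuous
      (fun i => v i) (fun i => (v i).continuous) (fun p => by rw [← huv]; exact hle p)
    have hu' := um.continuous c.continuous
    have hv' := fun i => (vm i).continuous c.continuous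
    let H : C(A × (∀ i, M i), ℝ) := ⟨fun p => u' p.1 + ∑ i, v' i (p.2 i),
      (hu'.comp continuous_fst).add (continuous_finsetSum _ fun i _ =>
        (hv' i).comp ((continuous_apply i).comp continuous_snd))⟩
    have hH : ∀ p, H p = u' p.1 + ∑ i, v' i (p.2 i) := fun p => rfl
    have hHh : ∀ p, h p ≤ H p := fun p => by
      rw [huv, hH]
      exact add_le_add (hu _) (Finset.sum_le_sum fun i _ => hv i _)
    have hHint : ∫ p, c p ∂γ - ε ≤ ∫ p, H p ∂γ :=
      hge.trans (integral_mono (integrable_cm γ h) (integrable_cm γ H) hHh)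
    have hHmod : ∀ ε δ, HasMod c ε δ → HasMod H (m * ε) δ := by
      intro ε δ hmod p q hpq
      rw [Prod.dist_eq, max_lt_iff] at hpq
      have e1 := um ε δ hmod p.1 q.1 hpq.1
      have e2 : ∀ i, |v' i (p.2 i) - v' i (q.2 i)| ≤ ε := fun i =>
        vm i ε δ hmod _ _ ((dist_le_pi_dist p.2 q.2 i).trans_lt hpq.2)
      have e3 : |∑ i, (v' i (p.2 i) - v' i (q.2 i))| ≤ Fintype.card ι * ε := by
        refine (Finset.abs_sum_le_sum_abs _ _).trans ?_
        refine (Finset.sum_le_sum fun i _ => e2 i).trans ?_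
        simp
      rw [hH, hH]
      have e4 : u' p.1 + ∑ i, v' i (p.2 i) - (u' q.1 + ∑ i, v' i (q.2 i))
          = (u' p.1 - u' q.1) + ∑ i, (v' i (p.2 i) - v' i (q.2 i)) := by
        rw [Finset.sum_sub_distrib]; ring
      rw [e4]
      refine (abs_add_le _ _).trans ?_
      simp only [m]
      linarith
    refine ⟨BoundedContinuousFunction.mkOfCompact H, ⟨?_, ?_, ?_, ?_⟩, hHint⟩
    · intro p
      simp only [BoundedContinuousFunction.mkOfCompact_apply, hH, sum_update_eq]
      rw [show ∀ a b : ℝ, ∀ f : ι → ℝ, ∑ i, (a + (b + f i) - (a + b)) = ∑ i, f i from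
        fun a b f => by simp, Finset.sum_sub_distrib]
      ring
    · exact hle'
    · have hq : ∃ q, -B - 1 ≤ H q := by
        by_contra hcon
        push Not at hcon
        have h1 : ∫ p, H p ∂γ ≤ -B - 1 := by
          have := integral_mono (integrable_cm γ H) (integrable_const (-B - 1))
            (fun p => (hcon p).le)
          simpa using this
        have h2 : -B ≤ ∫ p, c p ∂γ := by
          have := integral_mono (integrable_const (-B)) (integrable_cm γ c)
            (fun p => (abs_le.1 (hB p)).1)
          simpa using this
        have h3 : ∫ p, H p ∂γ < -B - 1 := by
          have hpos := integral_pos_iff_support_of_nonneg (μ := γ)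
            (f := fun p => -B - 1 - H p) (fun p => sub_nonneg.2 (hcon p).le)
            ((integrable_const _).sub (integrable_cm γ H))
          have : Function.support (fun p => -B - 1 - H p) = Set.univ := by
            ext p; simp [sub_ne_zero, (hcon p).ne']
          rw [this] at hpos
          have := hpos.2 (by simp)
          rw [integral_sub (integrable_const _) (integrable_cm γ H)] at this
          simpa using this
        linarith
      obtain ⟨q, hq⟩ := hq
      intro p
      have h1 := hHmod (2 * B) (dist p q + 1) (fun a b _ => by
        have h1 := abs_le.1 (hB a)
        have h2 := abs_le.1 (hB b)
        rw [abs_le]; constructor <;> linarith) p q (by linarith)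
      have h2 := (abs_le.1 h1).1
      change -R ≤ H p
      simp only [R]
      linarith
    · exact hHmod
  obtain ⟨H1, hH1, -⟩ := happrox 1 one_pos le_rfl
  obtain ⟨H, hH, hmax⟩ := hcomp.exists_isMaxOn ⟨H1, hH1⟩ hIcont.continuousOn
  refine ⟨⟨fun x => H (x, z0), by fun_prop⟩,
    fun i => ⟨fun y => H (x0, Function.update z0 i y) - H (x0, z0), ?_⟩, ?_, ?_⟩
  · exact (H.continuous.comp (continuous_const.prodMk
      (continuous_const.update i continuous_id))).sub continuous_const
  · intro p
    have := hH.1 p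
    simp only [ContinuousMap.coe_mk]
    rw [← this]
    exact hH.2.1 p
  · simp only [ContinuousMap.coe_mk]
    have e : ∀ p : A × (∀ i, M i), H (p.1, z0) +
      ∑ i, (H (x0, Function.update z0 i (p.2 i)) - H (x0, z0)) = H p := fun p => (hH.1 p).symm
    simp only [e]
    apply le_of_forall_pos_sub_le
    intro ε hε
    obtain ⟨G, hG, hGi⟩ := happrox (min ε 1) (by positivity) (min_le_right _ _)
    have := hmax hG
    have h3 := min_le_left ε 1
    simp only [Set.mem_ofPred_eq] at this
    linarith


lemma concave_touch {E : Type*} [NormedAddCommGroup E] [InnerProductSpace ℝ E]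
    {f g : E → ℝ} {C : ℝ} (hf : ConcaveOn ℝ Set.univ fun x => f x - C * ‖x‖ ^ 2)
    {x : E} (hle : ∀ y, g y ≤ f y) (heq : g x = f x) {L : E →L[ℝ] ℝ} (hg : HasFDerivAt g L x) :
    HasFDerivAt f L x := by
  have key : ∀ h, f (x + h) + f (x - h) ≤ 2 * f x + 2 * C * ‖h‖ ^ 2 := by
    intro h
    have h1 := hf.2 (Set.mem_univ (x + h)) (Set.mem_univ (x - h))
      (show (0 : ℝ) ≤ 1 / 2 by norm_num) (show (0 : ℝ) ≤ 1 / 2 by norm_num) (by norm_num)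
    have e : (1 / 2 : ℝ) • (x + h) + (1 / 2 : ℝ) • (x - h) = x := by module
    rw [e] at h1
    simp only [smul_eq_mul] at h1
    have h2 := parallelogram_law_with_norm ℝ x h
    have h3 : C * ‖x + h‖ ^ 2 + C * ‖x - h‖ ^ 2 = 2 * C * ‖x‖ ^ 2 + 2 * C * ‖h‖ ^ 2 := by
      linear_combination C * h2
    linarith
  rw [hasFDerivAt_iff_isLittleO_nhds_zero] at hg ⊢
  have hneg : (fun h : E => g (x - h) - g x + L h) =o[nhds 0] fun h => h := by
    have := hg.comp_tendsto (show Filter.Tendsto (fun h : E => -h) (nhds 0) (nhds 0) by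
      simpa using (continuous_neg (G := E)).tendsto 0)
    have h2 : (fun h : E => g (x - h) - g x + L h) =o[nhds 0] fun h => -h := by
      refine this.congr_left fun h => ?_
      simp [sub_eq_add_neg]
    exact Asymptotics.isLittleO_neg_right.1 h2
  have hsq : (fun h : E => 2 * C * ‖h‖ ^ 2) =o[nhds 0] fun h => h := by
    apply Asymptotics.IsLittleO.const_mul_left
    have : (fun h : E => ‖h‖ ^ 2) =o[nhds 0] fun h => ‖h‖ ^ 1 :=
      (Asymptotics.isLittleO_pow_pow (𝕜 := ℝ) (show 1 < 2 by norm_num)).comp_tendsto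
        (by simpa using (continuous_norm (E := E)).tendsto 0)
    simp only [pow_one] at this
    exact Asymptotics.isLittleO_norm_right.1 this
  have hdiff : (fun h : E => f (x + h) - g (x + h)) =o[nhds 0] fun h => h := by
    have hsum := (hsq.sub hg).sub hneg
    refine Asymptotics.IsBigO.trans_isLittleO ?_ hsum
    apply Asymptotics.IsBigO.of_bound 1
    refine Filter.Eventually.of_forall fun h => ?_
    have h1 := key h
    have h2 := hle (x + h)
    have h3 := hle (x - h)
    rw [Real.norm_of_nonneg (by linarith), one_mul, Real.norm_of_nonneg (by linarith)]
    linarith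
  refine (hg.add hdiff).congr_left fun h => ?_
  rw [heq]; ring

lemma concave_ae_diff {n : ℕ} {U : EuclideanSpace ℝ (Fin n) → ℝ} {C : ℝ}
    (hU : ConcaveOn ℝ Set.univ fun x => U x - C * ‖x‖ ^ 2) :
    Continuous U ∧ ∀ᵐ x, DifferentiableAt ℝ U x := by
  have hL := hU.locallyLipschitzOn isOpen_univ
  rw [locallyLipschitzOn_univ] at hL
  have hd : ∀ᵐ x, DifferentiableAt ℝ (fun x => U x - C * ‖x‖ ^ 2) x := by
    apply measure_null_of_locally_null
    intro x hx
    obtain ⟨K, t, ht, hK⟩ := hL x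
    refine ⟨_, inter_mem_nhdsWithin _ (interior_mem_nhds.2 ht), ?_⟩
    have := (hK.mono interior_subset).ae_differentiableWithinAt_of_mem (μ := volume)
    refine measure_mono_null ?_ this
    rintro y ⟨hy1, hy2⟩ hcon
    exact hy1 ((hcon hy2).differentiableAt (isOpen_interior.mem_nhds hy2))
  have eU : U = (fun x => U x - C * ‖x‖ ^ 2) + fun x => C * ‖x‖ ^ 2 := by ext y; simp
  constructor
  · have := hL.continuous.add (g := fun x => C * ‖x‖ ^ 2) (by fun_prop)
    rw [eU]; exact this
  · filter_upwards [hd] with x hx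
    have := hx.add (g := fun x => C * ‖x‖ ^ 2) (by
      exact (differentiableAt_id.norm_sq ℝ).const_mul C)
    rw [eU]; exact this

/-- A plan concentrated on a Borel graph. -/
lemma graph_map {E Z : Type*} [MeasurableSpace E] [MeasurableSpace Z] [StandardBorelSpace E]
    [StandardBorelSpace Z] [Nonempty Z] (G : Set (E × Z)) (hG : MeasurableSet G)
    (hinj : Set.InjOn Prod.fst G) :
    ∃ T : E → Z, Measurable T ∧ ∀ γ : Measure (E × Z), (∀ᵐ p ∂γ, p ∈ G) →
      γ = (γ.map Prod.fst).map (fun x => (x, T x)) := by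
  let φ : G → E := fun p => p.1.1
  have hG' : StandardBorelSpace G := hG.standardBorel
  have hφ : MeasurableEmbedding φ :=
    (measurable_fst.comp measurable_subtype_coe).measurableEmbedding
      (fun a b h => Subtype.ext (hinj a.2 b.2 h))
  let ψ : G → Z := fun p => p.1.2
  obtain ⟨T, hT, hTe⟩ := hφ.exists_measurable_extend
    (measurable_snd.comp measurable_subtype_coe : Measurable ψ) (fun _ => inferInstance)
  refine ⟨T, hT, fun γ hγ => ?_⟩
  have hm : Measurable fun x => (x, T x) := measurable_id.prodMk hT
  rw [Measure.map_map hm measurable_fst]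
  conv_lhs => rw [← Measure.map_id (μ := γ)]
  apply Measure.map_congr
  filter_upwards [hγ] with p hp
  have : T p.1 = p.2 := congrFun hTe ⟨p, hp⟩
  simp [this]

/-- Theorem 3.1: if c is continuous, semi-concave in x₁ and twisted on c-splitting
sets, and the first marginal μ₁ is absolutely continuous (with compact support),
then any optimal plan γ is induced by a Borel map T (Monge solution) and is the
unique optimal plan. -/
theorem monge_solution_and_uniqueness
    {n : ℕ} {ι : Type*} [Fintype ι] {M : ι → Type*}
    [∀ i, MetricSpace (M i)] [∀ i, CompactSpace (M i)] [∀ i, Nonempty (M i)]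
    [∀ i, MeasurableSpace (M i)] [∀ i, BorelSpace (M i)]
    (c : EuclideanSpace ℝ (Fin n) × (∀ i, M i) → ℝ) (hcont : Continuous c)
    (C : ℝ)
    (hsc : ∀ z : ∀ i, M i,
      ConcaveOn ℝ Set.univ fun x : EuclideanSpace ℝ (Fin n) => c (x, z) - C * ‖x‖ ^ 2)
    (htwist : ∀ x₁ : EuclideanSpace ℝ (Fin n),
      ∀ S : Set (EuclideanSpace ℝ (Fin n) × ∀ i, M i), S ⊆ {p | p.1 = x₁} →
      IsSplittingSet c S →
      ∀ p ∈ S, ∀ q ∈ S,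
        DifferentiableAt ℝ (fun x => c (x, p.2)) x₁ →
        DifferentiableAt ℝ (fun x => c (x, q.2)) x₁ →
        fderiv ℝ (fun x => c (x, p.2)) x₁ = fderiv ℝ (fun x => c (x, q.2)) x₁ →
        p = q)
    (μ₁ : Measure (EuclideanSpace ℝ (Fin n))) [IsProbabilityMeasure μ₁]
    (hac : μ₁ ≪ volume)
    (K : Set (EuclideanSpace ℝ (Fin n))) (hK : IsCompact K) (hμK : μ₁ K = 1)
    (μ : ∀ i, Measure (M i)) [∀ i, IsProbabilityMeasure (μ i)]
    (γ : Measure (EuclideanSpace ℝ (Fin n) × ∀ i, M i)) [IsProbabilityMeasure γ]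
    (hγ₁ : γ.map Prod.fst = μ₁) (hγᵢ : ∀ i, γ.map (fun p => p.2 i) = μ i)
    (hopt : ∀ γ' : Measure (EuclideanSpace ℝ (Fin n) × ∀ i, M i),
      IsProbabilityMeasure γ' → γ'.map Prod.fst = μ₁ →
      (∀ i, γ'.map (fun p => p.2 i) = μ i) →
      ∫ p, c p ∂γ ≤ ∫ p, c p ∂γ') :
    (∃ T : EuclideanSpace ℝ (Fin n) → ∀ i, M i,
      Measurable T ∧ γ = μ₁.map (fun x => (x, T x))) ∧
    (∀ γ' : Measure (EuclideanSpace ℝ (Fin n) × ∀ i, M i),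
      IsProbabilityMeasure γ' → γ'.map Prod.fst = μ₁ →
      (∀ i, γ'.map (fun p => p.2 i) = μ i) →
      ∫ p, c p ∂γ' ≤ ∫ p, c p ∂γ → γ' = γ) := by
  classical
  have hKm : MeasurableSet K := hK.measurableSet
  obtain ⟨k0, hk0⟩ : K.Nonempty := by
    rw [Set.nonempty_iff_ne_empty]; rintro rfl; simp at hμK
  have : CompactSpace K := isCompact_iff_compactSpace.1 hK
  have : Nonempty K := ⟨⟨k0, hk0⟩⟩
  have : Nonempty (∀ i, M i) := inferInstance
  have : StandardBorelSpace (∀ i, M i) := by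
    have : ∀ i, PolishSpace (M i) := fun i => inferInstance
    infer_instance
  obtain ⟨ρ, hρ, hρe⟩ := (MeasurableEmbedding.subtype_coe hKm).exists_measurable_extend
    (measurable_id : Measurable (id : K → K)) (fun _ => inferInstance)
  have hρK : ∀ x (h : x ∈ K), ρ x = ⟨x, h⟩ := fun x h => congrFun hρe ⟨x, h⟩
  have hμK' : ∀ᵐ x ∂μ₁, x ∈ K := by
    rw [← prob_compl_eq_zero_iff hKm] at hμK
    exact hμK
  have aeK : ∀ γ' : Measure (EuclideanSpace ℝ (Fin n) × ∀ i, M i), γ'.map Prod.fst = μ₁ →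
      ∀ᵐ p ∂γ', p.1 ∈ K := by
    intro γ' h
    rw [← h] at hμK'
    exact ae_of_ae_map measurable_fst.aemeasurable hμK'
  let Φ : EuclideanSpace ℝ (Fin n) × (∀ i, M i) → K × (∀ i, M i) := fun p => (ρ p.1, p.2)
  have hΦ : Measurable Φ := (hρ.comp measurable_fst).prodMk measurable_snd
  let j : K × (∀ i, M i) → EuclideanSpace ℝ (Fin n) × (∀ i, M i) := fun p => (p.1, p.2)
  have hj : Continuous j := by fun_prop
  have hjΦ : ∀ᵐ p ∂γ, j (Φ p) = p := by
    filter_upwards [aeK γ hγ₁] with p hp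
    simp [j, Φ, hρK p.1 hp]
  let γK := γ.map Φ
  have hγKp : IsProbabilityMeasure γK := Measure.isProbabilityMeasure_map hΦ.aemeasurable
  have transfer : ∀ f : EuclideanSpace ℝ (Fin n) × (∀ i, M i) → ℝ, Continuous f →
      ∫ p, f (j p) ∂γK = ∫ p, f p ∂γ := by
    intro f hf
    have hfj : Continuous fun p => f (j p) := hf.comp hj
    rw [integral_map hΦ.aemeasurable hfj.aestronglyMeasurable]
    apply integral_congr_ae
    filter_upwards [hjΦ] with p hp
    rw [hp]
  have mapback : γK.map j = γ := by
    rw [Measure.map_map hj.measurable hΦ]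
    conv_rhs => rw [← Measure.map_id (μ := γ)]
    apply Measure.map_congr
    filter_upwards [hjΦ] with p hp
    simpa using hp
  -- duality
  obtain ⟨u, v, huv, hdual⟩ := duality_attained γK ⟨fun p => c (j p), hcont.comp hj⟩ (by
    intro γ' hγ' hV
    simp only [ContinuousMap.coe_mk]
    have e1 : γ'.map Prod.fst = γK.map Prod.fst := by
      have := Measure.isProbabilityMeasure_map (μ := γ') measurable_fst.aemeasurable
      have := Measure.isProbabilityMeasure_map (μ := γK) measurable_fst.aemeasurable
      apply ext_of_forall_integral_eq_of_IsFiniteMeasure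
      intro f
      rw [integral_map measurable_fst.aemeasurable f.continuous.aestronglyMeasurable,
        integral_map measurable_fst.aemeasurable f.continuous.aestronglyMeasurable]
      exact hV ⟨fun p => f p.1, by fun_prop⟩ ⟨f.toContinuousMap, 0, fun p => by simp⟩
    have e2 : ∀ i, γ'.map (fun p => p.2 i) = γK.map (fun p => p.2 i) := by
      intro i
      have hmi : Measurable fun p : K × (∀ i, M i) => p.2 i := by fun_prop
      have := Measure.isProbabilityMeasure_map (μ := γ') hmi.aemeasurable
      have := Measure.isProbabilityMeasure_map (μ := γK) hmi.aemeasurable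
      apply ext_of_forall_integral_eq_of_IsFiniteMeasure
      intro f
      rw [integral_map hmi.aemeasurable f.continuous.aestronglyMeasurable,
        integral_map hmi.aemeasurable f.continuous.aestronglyMeasurable]
      refine hV ⟨fun p => f (p.2 i), by fun_prop⟩
        ⟨0, Function.update (fun _ => 0) i f.toContinuousMap, fun p => ?_⟩
      rw [Finset.sum_eq_single i]
      · simp
      · intro b _ hb
        rw [Function.update_of_ne hb]; simp
      · simp
    have h1 := hopt (γ'.map j) (Measure.isProbabilityMeasure_map hj.measurable.aemeasurable)
      (by
        rw [← hγ₁, ← mapback, Measure.map_map measurable_fst hj.measurable,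
          Measure.map_map measurable_fst hj.measurable]
        have : (Prod.fst ∘ j) = (Subtype.val : K → _) ∘ Prod.fst := rfl
        rw [this, ← Measure.map_map measurable_subtype_coe measurable_fst, e1,
          Measure.map_map measurable_subtype_coe measurable_fst])
      (by
        intro i
        have hmi : Measurable fun p : EuclideanSpace ℝ (Fin n) × (∀ i, M i) => p.2 i := by
          fun_prop
        rw [← hγᵢ, ← mapback, Measure.map_map hmi hj.measurable,
          Measure.map_map hmi hj.measurable]
        exact e2 i)
    rw [integral_map hj.measurable.aemeasurable hcont.aestronglyMeasurable] at h1
    rwa [transfer c hcont])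
  simp only [ContinuousMap.coe_mk] at huv hdual
  -- the conjugate potential on the whole space
  let F : (∀ i, M i) → EuclideanSpace ℝ (Fin n) → ℝ := fun z x => c (x, z) - ∑ i, v i (z i)
  obtain ⟨U, hU1, hU2⟩ := exists_inf F (fun x => by
    exact (hcont.comp (continuous_const.prodMk continuous_id)).sub
      (continuous_finsetSum _ fun k _ => (v k).continuous.comp (continuous_apply k)))
  have hUconc : ConcaveOn ℝ Set.univ fun x => U x - C * ‖x‖ ^ 2 := by
    refine ⟨convex_univ, fun x _ y _ a b ha hb hab => ?_⟩
    obtain ⟨z, hz⟩ := hU2 (a • x + b • y)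
    have h1 := (hsc z).2 (Set.mem_univ x) (Set.mem_univ y) ha hb hab
    have h2 := mul_le_mul_of_nonneg_left (hU1 z x) ha
    have h3 := mul_le_mul_of_nonneg_left (hU1 z y) hb
    simp only [smul_eq_mul, F] at h1 h2 h3 hz ⊢
    rw [hz]
    have h4 : a * (∑ i, v i (z i)) + b * (∑ i, v i (z i)) = ∑ i, v i (z i) := by
      rw [← add_mul, hab, one_mul]
    linarith
  obtain ⟨hUc, hUd⟩ := concave_ae_diff hUconc
  let W : EuclideanSpace ℝ (Fin n) × (∀ i, M i) → ℝ := fun p => U p.1 + ∑ i, v i (p.2 i)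
  have hvc : ∀ i, Continuous fun p : EuclideanSpace ℝ (Fin n) × (∀ i, M i) => v i (p.2 i) :=
    fun i => (v i).continuous.comp ((continuous_apply i).comp continuous_snd)
  have hWc : Continuous W :=
    (hUc.comp continuous_fst).add (continuous_finsetSum _ fun i _ => hvc i)
  have hWle : ∀ p, W p ≤ c p := fun p => by
    have := hU1 p.2 p.1
    simp only [W, F] at this ⊢
    linarith
  have hIntegrable : ∀ γ' : Measure (EuclideanSpace ℝ (Fin n) × ∀ i, M i), IsProbabilityMeasure γ' →
      γ'.map Prod.fst = μ₁ → ∀ f : EuclideanSpace ℝ (Fin n) × (∀ i, M i) → ℝ, Continuous f →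
      Integrable f γ' := by
    intro γ' hγ' h1 f hf
    obtain ⟨B, hB⟩ := (hK.prod (isCompact_univ (X := ∀ i, M i))).exists_bound_of_continuousOn
      hf.continuousOn
    refine Integrable.of_bound hf.aestronglyMeasurable B ?_
    filter_upwards [aeK γ' h1] with p hp
    exact hB p ⟨hp, Set.mem_univ _⟩
  have hWint : ∀ γ' : Measure (EuclideanSpace ℝ (Fin n) × ∀ i, M i), IsProbabilityMeasure γ' →
      γ'.map Prod.fst = μ₁ → (∀ i, γ'.map (fun p => p.2 i) = μ i) →
      ∫ p, W p ∂γ' = ∫ x, U x ∂μ₁ + ∑ i, ∫ y, v i y ∂(μ i) := by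
    intro γ' hγ' h1 h2
    simp only [W]
    rw [integral_add (hIntegrable γ' hγ' h1 (fun p => U p.1) (hUc.comp continuous_fst))
      (hIntegrable γ' hγ' h1 (fun p => ∑ i, v i (p.2 i)) (continuous_finsetSum _ fun i _ => hvc i)),
      integral_finsetSum _ (fun i _ => hIntegrable γ' hγ' h1 _ (hvc i))]
    congr 1
    · rw [← h1, integral_map measurable_fst.aemeasurable hUc.aestronglyMeasurable]
    · refine Finset.sum_congr rfl fun i _ => ?_
      have hmi : Measurable fun p : EuclideanSpace ℝ (Fin n) × (∀ i, M i) => p.2 i := by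
        fun_prop
      rw [← h2 i, integral_map hmi.aemeasurable (v i).continuous.aestronglyMeasurable]
  have hcW : ∫ p, c p ∂γ ≤ ∫ p, W p ∂γ := by
    rw [← transfer c hcont, ← transfer W hWc]
    refine hdual.trans ?_
    refine integral_mono (integrable_cm γK ⟨fun p : K × (∀ i, M i) =>
      u p.1 + ∑ i, v i (p.2 i), by fun_prop⟩)
      (integrable_cm γK ⟨fun p => W (j p), hWc.comp hj⟩) (fun p => ?_)
    obtain ⟨z, hz⟩ := hU2 p.1
    have := huv (p.1, z)
    simp only [W, j, F] at this hz ⊢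
    linarith
  let G : Set (EuclideanSpace ℝ (Fin n) × (∀ i, M i)) :=
    {p | DifferentiableAt ℝ U p.1 ∧ W p = c p}
  have hGm : MeasurableSet G :=
    (measurable_fst (measurableSet_of_differentiableAt ℝ U)).inter
      (isClosed_eq hWc hcont).measurableSet
  have hGae : ∀ γ' : Measure (EuclideanSpace ℝ (Fin n) × ∀ i, M i), IsProbabilityMeasure γ' →
      γ'.map Prod.fst = μ₁ → (∀ i, γ'.map (fun p => p.2 i) = μ i) →
      ∫ p, c p ∂γ' ≤ ∫ p, c p ∂γ → ∀ᵐ p ∂γ', p ∈ G := by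
    intro γ' hγ' h1 h2 h3
    have hd : ∀ᵐ p ∂γ', DifferentiableAt ℝ U p.1 := by
      have : ∀ᵐ x ∂μ₁, DifferentiableAt ℝ U x := hac.ae_le hUd
      rw [← h1] at this
      exact ae_of_ae_map measurable_fst.aemeasurable this
    have ic := hIntegrable γ' hγ' h1 c hcont
    have iW := hIntegrable γ' hγ' h1 W hWc
    have h0 : ∫ p, (c p - W p) ∂γ' = 0 := by
      apply le_antisymm
      · rw [integral_sub ic iW, hWint γ' hγ' h1 h2]
        rw [hWint γ inferInstance hγ₁ hγᵢ] at hcW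
        linarith
      · exact integral_nonneg fun p => sub_nonneg.2 (hWle p)
    rw [integral_eq_zero_iff_of_nonneg (fun p => sub_nonneg.2 (hWle p)) (ic.sub iW)] at h0
    filter_upwards [hd, h0] with p hp1 hp2
    refine ⟨hp1, ?_⟩
    simp only [Pi.zero_apply] at hp2
    linarith
  have hinj : Set.InjOn Prod.fst G := by
    intro p hp q hq hpq
    have hder : ∀ r ∈ G, r.1 = p.1 →
        HasFDerivAt (fun x => c (x, r.2)) (fderiv ℝ U p.1) p.1 := by
      intro r hr hrp
      have h1 : HasFDerivAt (fun x => U x + ∑ i, v i (r.2 i)) (fderiv ℝ U p.1) p.1 :=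
        hp.1.hasFDerivAt.add_const _
      refine concave_touch (hsc r.2) (fun y => hWle (y, r.2)) ?_ h1
      rw [← hrp]
      exact hr.2
    have dp := hder p hp rfl
    have dq := hder q hq hpq.symm
    refine htwist p.1 {r | r.1 = p.1 ∧ W r = c r} (fun r hr => hr.1)
      ⟨U, fun i => v i, hWle, fun r hr => hr.2⟩ p ⟨rfl, hp.2⟩ q ⟨hpq.symm, hq.2⟩
      dp.differentiableAt dq.differentiableAt (dp.fderiv.trans dq.fderiv.symm)
  obtain ⟨T, hT, hTγ⟩ := graph_map G hGm hinj
  have eγ := hTγ γ (hGae γ inferInstance hγ₁ hγᵢ le_rfl)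
  rw [hγ₁] at eγ
  refine ⟨⟨T, hT, eγ⟩, fun γ' hγ' h1 h2 h3 => ?_⟩
  have e' := hTγ γ' (hGae γ' hγ' h1 h2 h3)
  rw [h1] at e'
  rw [e', eγ]
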